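/- Suppose U ∈ V_{ρ^(m)}, with m-sum structure U(x₁,…,x_N) = Σ_{1≤i₁<⋯<i_m≤N} u(x_{i₁},…,x_{i_m}) a.e., satisfies ρ_U^(m) = ρ^(m) a.e. on Λ^m. Then F_P(V) ≤ F_P(U) for every V ∈ V_{ρ^(m)}. Consequently, if U₀, U₁ ∈ V_{ρ^(m)} (with generators u₀, u₁) both satisfy ρ_{U₀}^(m) = ρ_{U₁}^(m) = ρ^(m) a.e., then U₁ − U₀ is equal a.e. on Λ^N to a real constant, and u₁ − u₀ is equal a.e. on Λ^m to a real constant. -/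

import Mathlib

open MeasureTheory Real Filter
open scoped ENNReal

noncomputable section

variable {Λ : Type*} [MeasurableSpace Λ]

/-- The product measure on `Λ^k` (the `k`-fold product of `μ`). -/
def pm (μ : Measure Λ) (k : ℕ) : Measure (Fin k → Λ) := Measure.pi fun _ => μ

/-- A function on `Λ^k` is symmetric if it is invariant under all permutations
of its variables. -/
def IsSymm' {Λ : Type*} (k : ℕ) (f : (Fin k → Λ) → ℝ) : Prop :=
  ∀ σ : Equiv.Perm (Fin k), ∀ x, f (x ∘ σ) = f x

/-- The `m`-sum `Σ_{1 ≤ i₁ < ⋯ < i_m ≤ N} v(x_{i₁},…,x_{i_m})`. -/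
def mSum {Λ : Type*} (N m : ℕ) (v : (Fin m → Λ) → ℝ) (x : Fin N → Λ) : ℝ :=
  ∑ s ∈ Finset.powersetCard m (Finset.univ : Finset (Fin N)),
    if h : s.card = m then v (fun i => x (s.orderEmbOfFin h i)) else 0

/-- `V` has `m`-sum structure with (symmetric, measurable, real-valued) generator `v`. -/
def HasSumStruct (μ : Measure Λ) (N m : ℕ) (V : (Fin N → Λ) → ℝ)
    (v : (Fin m → Λ) → ℝ) : Prop :=
  IsSymm' m v ∧ Measurable v ∧ V =ᵐ[pm μ N] mSum N m v

/-- The measure `P d^N x`. -/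
def Pmeas (μ : Measure Λ) (N : ℕ) (P : (Fin N → Λ) → ℝ) : Measure (Fin N → Λ) :=
  (pm μ N).withDensity fun x => ENNReal.ofReal (P x)

/-- The measure `e^{-W} d^N x`. -/
def Wmeas (μ : Measure Λ) (N : ℕ) (W : (Fin N → Λ) → ℝ) : Measure (Fin N → Λ) :=
  (pm μ N).withDensity fun x => ENNReal.ofReal (Real.exp (-(W x)))

/-- The partition function `Z(V) = ∫ e^{-V-W} d^N x`, as an extended nonnegative real. -/
def ZE (μ : Measure Λ) (N : ℕ) (W V : (Fin N → Λ) → ℝ) : ℝ≥0∞ :=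
  ∫⁻ x, ENNReal.ofReal (Real.exp (-(V x) - W x)) ∂(pm μ N)

/-- The partition function `Z(V)` as a real number. -/
def Zfun (μ : Measure Λ) (N : ℕ) (W V : (Fin N → Λ) → ℝ) : ℝ :=
  (ZE μ N W V).toReal

/-- The functional `F_P(V) = exp(-∫ V P d^N x) / Z(V)`. -/
def FP (μ : Measure Λ) (N : ℕ) (P W V : (Fin N → Λ) → ℝ) : ℝ :=
  Real.exp (-∫ x, V x ∂(Pmeas μ N P)) / Zfun μ N W V

/-- Membership in the set `V_P`. -/
def memVP (μ : Measure Λ) (N m : ℕ) (P W V : (Fin N → Λ) → ℝ) : Prop :=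
  Integrable V (Pmeas μ N P) ∧
  Integrable (fun x => Real.exp (-(V x))) (Wmeas μ N W) ∧
  ∃ v, HasSumStruct μ N m V v

/-- Gluing `(y, z) ∈ Λ^m × Λ^{N-m}` into a point of `Λ^N`. -/
def glue {Λ : Type*} {N m : ℕ} (h : m ≤ N) (y : Fin m → Λ) (z : Fin (N - m) → Λ) :
    Fin N → Λ :=
  fun i => Fin.append y z (Fin.cast (by omega) i)

/-- The `m`-particle reduction `ρ^{(m)}` of `P`. -/
def rho (μ : Measure Λ) (N m : ℕ) (h : m ≤ N) (P : (Fin N → Λ) → ℝ)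
    (y : Fin m → Λ) : ℝ :=
  ∫ z, P (glue h y z) ∂(pm μ (N - m))

/-- The measure `ρ^{(m)} d^m x`. -/
def rhomeas (μ : Measure Λ) (N m : ℕ) (h : m ≤ N) (P : (Fin N → Λ) → ℝ) :
    Measure (Fin m → Λ) :=
  (pm μ m).withDensity fun y => ENNReal.ofReal (rho μ N m h P y)

/-- Membership in the set `V_{ρ^{(m)}}`. -/
def memVrho (μ : Measure Λ) (N m : ℕ) (h : m ≤ N) (P W V : (Fin N → Λ) → ℝ) : Prop :=
  Integrable (fun x => Real.exp (-(V x))) (Wmeas μ N W) ∧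
  ∃ v, HasSumStruct μ N m V v ∧ Integrable v (rhomeas μ N m h P)

/-- The `m`-particle density `ρ_U^{(m)}` associated with the potential `U`. -/
def rhoU (μ : Measure Λ) (N m : ℕ) (h : m ≤ N) (W U : (Fin N → Λ) → ℝ)
    (y : Fin m → Λ) : ℝ :=
  (∫ z, Real.exp (-(W (glue h y z)) - U (glue h y z)) ∂(pm μ (N - m))) / Zfun μ N W U

/-!
For exchangeable `Q`, the integral of an `m`-sum is `N.choose m` times the integral of its generator
against the `m`-particle marginal. So on `V_{ρ^{(m)}}` the functional `F_P` depends on `P` only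
through `ρ^{(m)}`, and if `ρ_U^{(m)} = ρ^{(m)}` then `P` may be replaced by the Gibbs measure `Q` of
`U`. For this measure `Z(V) / Z(U) = ∫ e^{U - V} dQ`, and Jensen's inequality for `exp` gives both
`F_P(V) ≤ F_P(U)` and the equality case: `U - V` is a.e. constant.

Two solutions thus differ by a constant, and subtracting it reduces the claim on generators to the
injectivity of `v ↦ mSum v`. Since `mSum v` vanishes on almost all `N`-tuples, for almost every
`x ∈ Λ^{N + m}` the sums of `S ↦ v (x_S)` over the `m`-subsets of any index set with at least `N`
elements vanish. Taking differences of such sums isolates the subsets containing a given `B`; with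
`#B = m` a single term is left.
-/

section InclusionMatrix

open Finset

variable {α M : Type*}

lemma sum_sum_powersetCard_erase [DecidableEq α] [AddCommMonoid M] (g : Finset α → M)
    (T : Finset α) (m : ℕ) :
    ∑ a ∈ T, ∑ S ∈ (T.erase a).powersetCard m, g S =
      (#T - m) • ∑ S ∈ T.powersetCard m, g S := by
  calc ∑ a ∈ T, ∑ S ∈ (T.erase a).powersetCard m, g S
      = ∑ S ∈ T.powersetCard m, ∑ _a ∈ T \ S, g S :=
        sum_comm' fun a S => by
          simp only [mem_powersetCard, Finset.mem_sdiff, subset_erase]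
          tauto
    _ = (#T - m) • ∑ S ∈ T.powersetCard m, g S := by
        rw [smul_sum]
        refine sum_congr rfl fun S hS => ?_
        obtain ⟨hST, hSm⟩ := mem_powersetCard.1 hS
        rw [sum_const, card_sdiff_of_subset hST, hSm]

lemma sum_powersetCard_eq_zero_of_le [AddCommMonoid M] [IsAddTorsionFree M]
    {g : Finset α → M} {m n : ℕ} (hmn : m ≤ n)
    (hg : ∀ T : Finset α, #T = n → ∑ S ∈ T.powersetCard m, g S = 0)
    {k : ℕ} (hnk : n ≤ k) : ∀ T : Finset α, #T = k → ∑ S ∈ T.powersetCard m, g S = 0 := by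
  classical
  induction k, hnk using Nat.le_induction with
  | base => exact hg
  | succ k hnk ih =>
    intro T hT
    have herase : ∑ a ∈ T, ∑ S ∈ (T.erase a).powersetCard m, g S = 0 :=
      sum_eq_zero fun a ha => ih _ (by rw [card_erase_of_mem ha, hT, Nat.add_sub_cancel])
    rw [sum_sum_powersetCard_erase] at herase
    exact (smul_eq_zero_iff_right (by omega)).1 herase

lemma sum_filter_superset_eq_zero [DecidableEq α] [AddCommGroup M] {g : Finset α → M} {m n : ℕ}
    (hg : ∀ T : Finset α, n ≤ #T → ∑ S ∈ T.powersetCard m, g S = 0) (B : Finset α) :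
    ∀ A : Finset α, n + #B ≤ #A → ∑ S ∈ A.powersetCard m with B ⊆ S, g S = 0 := by
  induction B using Finset.induction_on with
  | empty => simpa using hg
  | insert b B hb ih =>
    intro A hA
    rw [card_insert_of_notMem hb] at hA
    have hsplit := sum_filter_add_sum_filter_not {S ∈ A.powersetCard m | B ⊆ S} (b ∈ ·) g
    have hmem : {S ∈ {S ∈ A.powersetCard m | B ⊆ S} | b ∈ S} =
        {S ∈ A.powersetCard m | insert b B ⊆ S} := by
      grind
    have hnotMem : {S ∈ {S ∈ A.powersetCard m | B ⊆ S} | b ∉ S} =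
        {S ∈ (A.erase b).powersetCard m | B ⊆ S} := by
      grind
    have hAb := pred_card_le_card_erase (s := A) (a := b)
    rwa [hmem, hnotMem, ih A (by omega), ih (A.erase b) (by omega), add_zero] at hsplit

lemma eq_zero_of_sum_powersetCard_eq_zero [Fintype α] [AddCommGroup M] [IsAddTorsionFree M]
    {g : Finset α → M} {m n : ℕ} (hmn : m ≤ n) (hα : n + m ≤ Fintype.card α)
    (hg : ∀ T : Finset α, #T = n → ∑ S ∈ T.powersetCard m, g S = 0)
    {S : Finset α} (hS : #S = m) : g S = 0 := by
  classical
  have hsuperset : {S' ∈ (univ : Finset α).powersetCard m | S ⊆ S'} = {S} := by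
    ext S'
    simp only [mem_filter, mem_powersetCard_univ, mem_singleton]
    exact ⟨fun h => (eq_of_subset_of_card_le h.2 (h.1.trans hS.symm).le).symm,
      by rintro rfl; exact ⟨hS, Subset.rfl⟩⟩
  have hsum := sum_filter_superset_eq_zero
    (fun T hT => sum_powersetCard_eq_zero_of_le hmn hg hT T rfl) S univ (by rwa [hS, card_univ])
  rwa [hsuperset, sum_singleton] at hsum

end InclusionMatrix

section Density

variable {α β : Type*} [MeasurableSpace α] [MeasurableSpace β]

lemma measurePreserving_withDensity {μ : Measure α} {ν : Measure β} {f : α → β}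
    (hf : MeasurePreserving f μ ν) {g : β → ℝ≥0∞} (hg : AEMeasurable g ν) :
    MeasurePreserving f (μ.withDensity (g ∘ f)) (ν.withDensity g) := by
  refine ⟨hf.measurable, Measure.ext fun s hs => ?_⟩
  have hfs := hf.restrict_preimage hs
  rw [Measure.map_apply hf.measurable hs, withDensity_apply _ (hf.measurable hs),
    withDensity_apply _ hs, ← hfs.map_eq,
    lintegral_map' (hfs.map_eq.symm ▸ hg.restrict) hfs.aemeasurable]
  rfl

lemma map_fst_withDensity_prod {μ : Measure α} {ν : Measure β} [SFinite μ] [SFinite ν]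
    {g : α × β → ℝ≥0∞} (hg : AEMeasurable g (μ.prod ν)) :
    ((μ.prod ν).withDensity g).map Prod.fst = μ.withDensity fun a => ∫⁻ b, g (a, b) ∂ν := by
  ext s hs
  rw [Measure.map_apply measurable_fst hs, withDensity_apply _ (measurable_fst hs),
    withDensity_apply _ hs, ← Set.prod_univ, setLIntegral_prod _ hg.restrict,
    Measure.restrict_univ]

end Density

section Exchangeable

variable {ι κ : Type*}

/-- A measure on `Λ^ι` is exchangeable if it is invariant under permutations of the variables. -/
def IsExchangeable (Q : Measure (ι → Λ)) : Prop :=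
  ∀ σ : Equiv.Perm ι, MeasurePreserving (fun x : ι → Λ => x ∘ σ) Q Q

lemma measurable_comp_index (f : κ → ι) : Measurable fun x : ι → Λ => x ∘ f :=
  measurable_pi_lambda _ fun i => measurable_pi_apply (f i)

lemma measurePreserving_comp_equiv [Fintype ι] [Fintype κ] (μ : Measure Λ) [SigmaFinite μ]
    (e : κ ≃ ι) : MeasurePreserving (fun x : ι → Λ => x ∘ e)
      (Measure.pi fun _ => μ) (Measure.pi fun _ => μ) :=
  measurePreserving_arrowCongr' (fun _ => μ) (fun _ => μ) e.symm (.refl Λ) fun _ => .id μ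

lemma isExchangeable_pi [Fintype ι] (μ : Measure Λ) [SigmaFinite μ] :
    IsExchangeable (Measure.pi fun _ : ι => μ) :=
  measurePreserving_comp_equiv μ

lemma IsExchangeable.withDensity {Q : Measure (ι → Λ)} (hQ : IsExchangeable Q)
    {g : (ι → Λ) → ℝ≥0∞} (hg : AEMeasurable g Q)
    (hsymm : ∀ σ : Equiv.Perm ι, ∀ᵐ x ∂Q, g (x ∘ σ) = g x) :
    IsExchangeable (Q.withDensity g) := by
  intro σ
  have hσ := measurePreserving_withDensity (hQ σ) hg
  have hcomp : (g ∘ fun x => x ∘ σ) =ᵐ[Q] g := hsymm σ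
  rwa [withDensity_congr_ae hcomp] at hσ

lemma IsExchangeable.map_comp_eq [Finite κ] {Q : Measure (ι → Λ)} (hQ : IsExchangeable Q)
    {f g : κ → ι} (hf : Function.Injective f) (hg : Function.Injective g) :
    Q.map (fun x => x ∘ f) = Q.map (fun x => x ∘ g) := by
  obtain ⟨σ, hσ⟩ := Equiv.Perm.exists_extending_pair f g hf hg
  calc Q.map (fun x => x ∘ f)
      = (Q.map fun x => x ∘ σ).map fun x => x ∘ f := by rw [(hQ σ).map_eq]
    _ = Q.map (fun x => x ∘ g) := by
      rw [Measure.map_map (measurable_comp_index f) (measurable_comp_index σ), ← funext hσ]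
      rfl

end Exchangeable

section Glue

variable {α : Type*} {N m : ℕ} (h : m ≤ N) (y : Fin m → α) (z : Fin (N - m) → α)

lemma glue_eq_sumElim_comp :
    glue h y z =
      Sum.elim y z ∘ (finCongr (by omega : N = m + (N - m))).trans finSumFinEquiv.symm := by
  rw [← Equiv.comp_symm_eq]
  funext i
  cases i <;> simp [glue]

lemma glue_comp_castLE : glue h y z ∘ Fin.castLE h = y :=
  funext fun i => Fin.append_left y z i

end Glue

section ProductMeasure

variable (μ : Measure Λ) [SigmaFinite μ] {N m : ℕ}

instance (k : ℕ) : SigmaFinite (pm μ k) :=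
  inferInstanceAs (SigmaFinite (Measure.pi fun _ => μ))

lemma pm_univ (k : ℕ) : pm μ k Set.univ = μ Set.univ ^ k := by
  simp [pm, Measure.pi_univ]

lemma measurePreserving_glue (h : m ≤ N) :
    MeasurePreserving (fun p : (Fin m → Λ) × (Fin (N - m) → Λ) => glue h p.1 p.2)
      ((pm μ m).prod (pm μ (N - m))) (pm μ N) := by
  simp_rw [glue_eq_sumElim_comp]
  exact (measurePreserving_comp_equiv μ _).comp
    (measurePreserving_sumPiEquivProdPi_symm fun _ : Fin m ⊕ Fin (N - m) => μ)

lemma map_comp_castLE_pm (h : m ≤ N) :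
    (pm μ N).map (fun x => x ∘ Fin.castLE h) = μ Set.univ ^ (N - m) • pm μ m := by
  have hglue := measurePreserving_glue μ h
  rw [← hglue.map_eq, Measure.map_map (measurable_comp_index _) hglue.measurable]
  simp only [Function.comp_def (fun x : Fin N → Λ => x ∘ Fin.castLE h), glue_comp_castLE]
  rw [Measure.map_fst_prod, pm_univ]

variable {μ}

lemma ae_pm_comp_iff (hμ : μ ≠ 0) {f : Fin m → Fin N} (hf : Function.Injective f)
    {p : (Fin m → Λ) → Prop} (hp : MeasurableSet {y | p y}) :
    (∀ᵐ x ∂pm μ N, p (x ∘ f)) ↔ ∀ᵐ y ∂pm μ m, p y := by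
  have h : m ≤ N := by simpa using Fintype.card_le_of_injective f hf
  have hmap : (pm μ N).map (fun x => x ∘ f) = μ Set.univ ^ (N - m) • pm μ m := by
    rw [← map_comp_castLE_pm μ h]
    exact (isExchangeable_pi μ).map_comp_eq hf (Fin.castLE_injective h)
  rw [← ae_map_iff (measurable_comp_index f).aemeasurable hp, hmap]
  exact Measure.ae_ennreal_smul_measure_iff (pow_ne_zero _ (by simpa using hμ))

lemma map_comp_castLE_Pmeas (h : m ≤ N) {R : (Fin N → Λ) → ℝ} (hR : Integrable R (pm μ N))
    (hR0 : 0 ≤ᵐ[pm μ N] R) :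
    (Pmeas μ N R).map (fun x => x ∘ Fin.castLE h) = rhomeas μ N m h R := by
  have hglue := measurePreserving_glue μ h
  have hPmeas := measurePreserving_withDensity hglue hR.1.aemeasurable.ennreal_ofReal
  have hrho : (fun y => ENNReal.ofReal (rho μ N m h R y)) =ᵐ[pm μ m]
      fun y => ∫⁻ z, ENNReal.ofReal (R (glue h y z)) ∂pm μ (N - m) := by
    filter_upwards [(hglue.integrable_comp_of_integrable hR).prod_right_ae,
      Measure.ae_ae_of_ae_prod (hglue.quasiMeasurePreserving.ae hR0)] with y hy hy0
    exact ofReal_integral_eq_lintegral_ofReal hy hy0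
  rw [Pmeas, ← hPmeas.map_eq, Measure.map_map (measurable_comp_index _) hglue.measurable]
  simp only [Function.comp_def (fun x : Fin N → Λ => x ∘ Fin.castLE h), glue_comp_castLE]
  rw [rhomeas, withDensity_congr_ae hrho]
  exact map_fst_withDensity_prod
    (hR.1.aemeasurable.ennreal_ofReal.comp_quasiMeasurePreserving hglue.quasiMeasurePreserving)

end ProductMeasure

section MSum

variable {α : Type*} {N m : ℕ} {v : (Fin m → α) → ℝ}

/-- The value of the generator `v` on the coordinates of `x` indexed by the `m`-element set `s`,
so that an `m`-sum becomes a sum over subsets. Like the summand of `mSum`, it lists `s` in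
increasing order and is `0` on sets of any other size. -/
def subsetEval (v : (Fin m → α) → ℝ) (x : Fin N → α) (s : Finset (Fin N)) : ℝ :=
  if h : s.card = m then v (x ∘ s.orderEmbOfFin h) else 0

lemma subsetEval_of_card_eq (v : (Fin m → α) → ℝ) (x : Fin N → α) {s : Finset (Fin N)}
    (hs : s.card = m) : subsetEval v x s = v (x ∘ s.orderEmbOfFin hs) :=
  dif_pos hs

lemma mSum_eq_sum_subsetEval (v : (Fin m → α) → ℝ) (x : Fin N → α) :
    mSum N m v x = ∑ s ∈ Finset.univ.powersetCard m, subsetEval v x s :=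
  rfl

lemma subsetEval_map_univ (hv : IsSymm' m v) (x : Fin N → α) (f : Fin m ↪ Fin N) :
    subsetEval v x (Finset.univ.map f) = v (x ∘ f) := by
  have hcard : (Finset.univ.map f).card = m := by simp
  have hrange (i : Fin m) : ∃ j, (Finset.univ.map f).orderEmbOfFin hcard j = f i := by
    rw [← Set.mem_range, Finset.range_orderEmbOfFin]
    simp
  choose τ hτ using hrange
  have hτinj : Function.Injective τ := fun i j hij => f.injective (by rw [← hτ, ← hτ, hij])
  have hcomp : (Finset.univ.map f).orderEmbOfFin hcard ∘ τ = f := funext hτ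
  rw [subsetEval_of_card_eq v x hcard,
    ← hv (.ofBijective τ (Finite.injective_iff_bijective.1 hτinj)), Equiv.coe_ofBijective,
    Function.comp_assoc, hcomp]

lemma mSum_comp_embedding {M : ℕ} (hv : IsSymm' m v) (x : Fin M → α) (f : Fin N ↪ Fin M) :
    mSum N m v (x ∘ f) = ∑ s ∈ (Finset.univ.map f).powersetCard m, subsetEval v x s := by
  rw [mSum_eq_sum_subsetEval, Finset.powersetCard_map, Finset.sum_map]
  refine Finset.sum_congr rfl fun s hs => ?_
  have hcard := (Finset.mem_powersetCard.1 hs).2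
  have hmap : Finset.univ.map ((s.orderEmbOfFin hcard).toEmbedding.trans f) = s.map f := by
    rw [← Finset.map_map, Finset.map_orderEmbOfFin_univ]
  calc subsetEval v (x ∘ f) s
      = v (x ∘ (s.orderEmbOfFin hcard).toEmbedding.trans f) := subsetEval_of_card_eq v _ hcard
    _ = subsetEval v x (s.map f) := by rw [← subsetEval_map_univ hv, hmap]

lemma mSum_comp_perm (hv : IsSymm' m v) (x : Fin N → α) (σ : Equiv.Perm (Fin N)) :
    mSum N m v (x ∘ σ) = mSum N m v x := by
  have h := mSum_comp_embedding hv x σ.toEmbedding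
  rwa [Finset.map_univ_equiv] at h

lemma mSum_sub_sub_const (v w : (Fin m → α) → ℝ) (c : ℝ) (x : Fin N → α) :
    mSum N m (fun y => v y - w y - c) x = mSum N m v x - mSum N m w x - N.choose m * c := by
  have hconst : N.choose m * c = ∑ _s ∈ (Finset.univ : Finset (Fin N)).powersetCard m, c := by
    simp
  simp only [mSum_eq_sum_subsetEval]
  rw [hconst, ← Finset.sum_sub_distrib, ← Finset.sum_sub_distrib]
  refine Finset.sum_congr rfl fun s hs => ?_
  simp only [subsetEval_of_card_eq _ _ (Finset.mem_powersetCard.1 hs).2]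

end MSum

section MSumIntegral

variable {N m : ℕ} {v : (Fin m → Λ) → ℝ}

lemma measurable_mSum (hv : Measurable v) : Measurable (mSum N m v) := by
  refine Finset.measurable_fun_sum _ fun s hs => ?_
  simp only [(Finset.mem_powersetCard.1 hs).2, dite_true]
  exact hv.comp (measurable_comp_index _)

lemma ae_eq_zero_of_mSum_ae_eq_zero {μ : Measure Λ} [SigmaFinite μ] (hμ : μ ≠ 0) (h : m ≤ N)
    (hv : IsSymm' m v) (hvm : Measurable v) (hsum : mSum N m v =ᵐ[pm μ N] 0) :
    v =ᵐ[pm μ m] 0 := by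
  have hle : m ≤ N + m := h.trans (Nat.le_add_right N m)
  have hall : ∀ᵐ x ∂pm μ (N + m), ∀ f : Fin N ↪ Fin (N + m), mSum N m v (x ∘ f) = 0 :=
    ae_all_iff.2 fun f =>
      (ae_pm_comp_iff hμ f.injective (measurable_mSum hvm (measurableSet_singleton 0))).2 hsum
  refine (ae_pm_comp_iff hμ (Fin.castLE_injective hle) (hvm (measurableSet_singleton 0))).1 ?_
  filter_upwards [hall] with x hx
  have hsubsets (T : Finset (Fin (N + m))) (hT : T.card = N) :
      ∑ S ∈ T.powersetCard m, subsetEval v x S = 0 := by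
    rw [← hx (T.orderEmbOfFin hT).toEmbedding, mSum_comp_embedding hv,
      Finset.map_orderEmbOfFin_univ]
  rw [← Fin.coe_castLEEmb, ← subsetEval_map_univ hv]
  exact eq_zero_of_sum_powersetCard_eq_zero h (by simp) hsubsets (by simp)

lemma IsExchangeable.integrable_subsetEval {Q : Measure (Fin N → Λ)} (hQ : IsExchangeable Q)
    (h : m ≤ N) (hv : Integrable v (Q.map fun x => x ∘ Fin.castLE h)) {s : Finset (Fin N)}
    (hs : s.card = m) : Integrable (fun x => subsetEval v x s) Q := by
  rw [hQ.map_comp_eq (Fin.castLE_injective h) (s.orderEmbOfFin hs).injective] at hv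
  simp only [subsetEval_of_card_eq v _ hs]
  exact hv.comp_measurable (measurable_comp_index _)

lemma IsExchangeable.integral_subsetEval {Q : Measure (Fin N → Λ)} (hQ : IsExchangeable Q)
    (h : m ≤ N) (hv : AEStronglyMeasurable v (Q.map fun x => x ∘ Fin.castLE h))
    {s : Finset (Fin N)} (hs : s.card = m) :
    ∫ x, subsetEval v x s ∂Q = ∫ y, v y ∂Q.map fun x => x ∘ Fin.castLE h := by
  rw [hQ.map_comp_eq (Fin.castLE_injective h) (s.orderEmbOfFin hs).injective] at hv ⊢
  rw [integral_map (measurable_comp_index _).aemeasurable hv]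
  simp only [subsetEval_of_card_eq v _ hs]

lemma IsExchangeable.integrable_mSum {Q : Measure (Fin N → Λ)} (hQ : IsExchangeable Q)
    (h : m ≤ N) (hv : Integrable v (Q.map fun x => x ∘ Fin.castLE h)) :
    Integrable (mSum N m v) Q :=
  integrable_finsetSum _ fun _ hs =>
    hQ.integrable_subsetEval h hv (Finset.mem_powersetCard.1 hs).2

lemma IsExchangeable.integral_mSum {Q : Measure (Fin N → Λ)} (hQ : IsExchangeable Q)
    (h : m ≤ N) (hv : Integrable v (Q.map fun x => x ∘ Fin.castLE h)) :
    ∫ x, mSum N m v x ∂Q = N.choose m * ∫ y, v y ∂Q.map fun x => x ∘ Fin.castLE h := by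
  have hterm (s) (hs : s ∈ (Finset.univ : Finset (Fin N)).powersetCard m) :=
    hQ.integral_subsetEval h hv.1 (Finset.mem_powersetCard.1 hs).2
  simp only [mSum_eq_sum_subsetEval]
  rw [integral_finsetSum _ fun s hs =>
    hQ.integrable_subsetEval h hv (Finset.mem_powersetCard.1 hs).2, Finset.sum_congr rfl hterm]
  simp

end MSumIntegral

section Gibbs

variable {α : Type*} [MeasurableSpace α] {Q ν : Measure α} {U V : α → ℝ}

/-- The functional `V ↦ exp (-∫ V dQ) / ∫ exp (-V) dν` of the Gibbs variational principle, for a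
state `Q` and a reference measure `ν`; `F_P` is the case `Q = P d^N x`, `ν = e^{-W} d^N x`. -/
def gibbsFunctional (Q ν : Measure α) (V : α → ℝ) : ℝ :=
  exp (-∫ x, V x ∂Q) / ∫ x, exp (-V x) ∂ν

lemma gibbsFunctional_eq_of_ae_eq_add_const [IsProbabilityMeasure Q] (hQν : Q ≪ ν)
    (hU : Integrable U Q) {C : ℝ} (hVU : V =ᵐ[ν] fun x => U x + C) :
    gibbsFunctional Q ν V = gibbsFunctional Q ν U := by
  have hQint : ∫ x, V x ∂Q = ∫ x, U x ∂Q + C := by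
    rw [integral_congr_ae (hQν.ae_eq hVU), integral_add hU (integrable_const C)]
    simp
  have hνint : ∫ x, exp (-V x) ∂ν = exp (-C) * ∫ x, exp (-U x) ∂ν := by
    rw [← integral_const_mul]
    refine integral_congr_ae (hVU.mono fun x hx => ?_)
    simp only [hx, neg_add_rev, exp_add]
  rw [gibbsFunctional, hQint, hνint, neg_add_rev, exp_add, mul_div_mul_left _ _ (exp_ne_zero _),
    gibbsFunctional]

lemma ae_eq_add_const_or_gibbsFunctional_tilted_lt [NeZero ν]
    (hUexp : Integrable (fun x => exp (-U x)) ν) (hVexp : Integrable (fun x => exp (-V x)) ν)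
    (hU : Integrable U (ν.tilted (-U))) (hV : Integrable V (ν.tilted (-U))) :
    (∃ C, V =ᵐ[ν] fun x => U x + C) ∨
      gibbsFunctional (ν.tilted (-U)) ν V < gibbsFunctional (ν.tilted (-U)) ν U := by
  have : IsProbabilityMeasure (ν.tilted (-U)) := isProbabilityMeasure_tilted hUexp
  have hexp : Integrable (fun x => exp ((U - V) x)) (ν.tilted (-U)) := by
    refine (integrable_tilted_iff (f := -U) hUexp _).2 (hVexp.congr (ae_of_all _ fun x => ?_))
    simp only [Pi.neg_apply, Pi.sub_apply, smul_eq_mul, ← exp_add, neg_add_cancel_left,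
      sub_eq_add_neg]
  have hexpInt : ∫ x, exp ((U - V) x) ∂ν.tilted (-U) =
      (∫ x, exp (-V x) ∂ν) / ∫ x, exp (-U x) ∂ν := by
    rw [integral_exp_tilted, neg_add_eq_sub, sub_sub_cancel_left]
    rfl
  rcases strictConvexOn_exp.ae_eq_const_or_map_average_lt continuous_exp.continuousOn isClosed_univ
    (by simp) (hU.sub hV) hexp with hconst | hlt
  · refine .inl ⟨-⨍ x, (U - V) x ∂ν.tilted (-U), ?_⟩
    filter_upwards [(absolutelyContinuous_tilted (f := -U) hUexp).ae_eq hconst] with x hx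
    rw [Function.const_apply] at hx
    rw [← hx, Pi.sub_apply, neg_sub, add_sub_cancel]
  · right
    rw [average_eq_integral, average_eq_integral, hexpInt, integral_sub' hU hV,
      lt_div_iff₀ (integral_exp_pos hUexp)] at hlt
    rw [gibbsFunctional, gibbsFunctional,
      div_lt_div_iff₀ (integral_exp_pos hVexp) (integral_exp_pos hUexp)]
    calc exp (-∫ x, V x ∂ν.tilted (-U)) * ∫ x, exp (-U x) ∂ν
        = exp (-∫ x, U x ∂ν.tilted (-U)) *
            (exp (∫ x, U x ∂ν.tilted (-U) - ∫ x, V x ∂ν.tilted (-U)) * ∫ x, exp (-U x) ∂ν) := by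
          rw [← mul_assoc, ← exp_add, sub_eq_add_neg, neg_add_cancel_left]
      _ < exp (-∫ x, U x ∂ν.tilted (-U)) * ∫ x, exp (-V x) ∂ν := by gcongr

lemma gibbsFunctional_tilted_le [NeZero ν]
    (hUexp : Integrable (fun x => exp (-U x)) ν) (hVexp : Integrable (fun x => exp (-V x)) ν)
    (hU : Integrable U (ν.tilted (-U))) (hV : Integrable V (ν.tilted (-U))) :
    gibbsFunctional (ν.tilted (-U)) ν V ≤ gibbsFunctional (ν.tilted (-U)) ν U := by
  rcases ae_eq_add_const_or_gibbsFunctional_tilted_lt hUexp hVexp hU hV with ⟨C, hC⟩ | hlt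
  · have : IsProbabilityMeasure (ν.tilted (-U)) := isProbabilityMeasure_tilted hUexp
    exact (gibbsFunctional_eq_of_ae_eq_add_const (tilted_absolutelyContinuous ν _) hU hC).le
  · exact hlt.le

end Gibbs

section SymmetricDensity

variable {μ : Measure Λ} {N m : ℕ} {R R' V : (Fin N → Λ) → ℝ} {v : (Fin m → Λ) → ℝ}

/-- A density of an (unnormalized) exchangeable `N`-particle state: an integrable, a.e. nonnegative
and a.e. symmetric function on `Λ^N`. -/
structure IsSymmDensity (μ : Measure Λ) (R : (Fin N → Λ) → ℝ) : Prop where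
  integrable : Integrable R (pm μ N)
  nonneg : 0 ≤ᵐ[pm μ N] R
  symm : ∀ σ : Equiv.Perm (Fin N), ∀ᵐ x ∂pm μ N, R (x ∘ σ) = R x

lemma HasSumStruct.aemeasurable (hV : HasSumStruct μ N m V v) : AEMeasurable V (pm μ N) :=
  ⟨mSum N m v, measurable_mSum hV.2.1, hV.2.2⟩

variable [SigmaFinite μ]

lemma HasSumStruct.ae_comp_perm (hV : HasSumStruct μ N m V v) (σ : Equiv.Perm (Fin N)) :
    ∀ᵐ x ∂pm μ N, V (x ∘ σ) = V x := by
  filter_upwards [hV.2.2, (isExchangeable_pi μ σ).quasiMeasurePreserving.ae hV.2.2] with x hx hxσ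
  rw [hx, hxσ, mSum_comp_perm hV.1]

namespace IsSymmDensity

lemma isExchangeable (hR : IsSymmDensity μ R) : IsExchangeable (Pmeas μ N R) :=
  (isExchangeable_pi μ).withDensity hR.integrable.1.aemeasurable.ennreal_ofReal fun σ =>
    (hR.symm σ).mono fun _ hx => congrArg ENNReal.ofReal hx

lemma integrable_of_hasSumStruct (hR : IsSymmDensity μ R) (h : m ≤ N)
    (hV : HasSumStruct μ N m V v) (hv : Integrable v (rhomeas μ N m h R)) :
    Integrable V (Pmeas μ N R) := by
  rw [← map_comp_castLE_Pmeas h hR.integrable hR.nonneg] at hv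
  exact (hR.isExchangeable.integrable_mSum h hv).congr
    ((withDensity_absolutelyContinuous _ _).ae_eq hV.2.2.symm)

lemma integral_of_hasSumStruct (hR : IsSymmDensity μ R) (h : m ≤ N)
    (hV : HasSumStruct μ N m V v) (hv : Integrable v (rhomeas μ N m h R)) :
    ∫ x, V x ∂Pmeas μ N R = N.choose m * ∫ y, v y ∂rhomeas μ N m h R := by
  have hae : V =ᵐ[Pmeas μ N R] mSum N m v := (withDensity_absolutelyContinuous _ _).ae_eq hV.2.2
  rw [← map_comp_castLE_Pmeas h hR.integrable hR.nonneg] at hv ⊢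
  rw [integral_congr_ae hae, hR.isExchangeable.integral_mSum h hv]

lemma FP_eq_of_rhomeas_eq (hR : IsSymmDensity μ R) (hR' : IsSymmDensity μ R') (h : m ≤ N)
    (hRR' : rhomeas μ N m h R = rhomeas μ N m h R') (W : (Fin N → Λ) → ℝ)
    (hV : HasSumStruct μ N m V v) (hv : Integrable v (rhomeas μ N m h R)) :
    FP μ N R W V = FP μ N R' W V := by
  rw [FP, FP, hR.integral_of_hasSumStruct h hV hv,
    hR'.integral_of_hasSumStruct h hV (hRR' ▸ hv), hRR']

end IsSymmDensity

end SymmetricDensity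

section GibbsDensity

variable {μ : Measure Λ} {N m : ℕ} {W U V : (Fin N → Λ) → ℝ} {u : (Fin m → Λ) → ℝ}

lemma absolutelyContinuous_Wmeas (hW : AEMeasurable W (pm μ N)) : pm μ N ≪ Wmeas μ N W :=
  withDensity_absolutelyContinuous' (by fun_prop)
    (ae_of_all _ fun _ => (ENNReal.ofReal_pos.2 (exp_pos _)).ne')

lemma neZero_Wmeas [SigmaFinite μ] (hμ : μ ≠ 0) (hW : AEMeasurable W (pm μ N)) :
    NeZero (Wmeas μ N W) := by
  refine ⟨fun hzero => ?_⟩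
  have hpm : pm μ N = 0 := Measure.absolutelyContinuous_zero_iff.1
    (hzero ▸ absolutelyContinuous_Wmeas hW)
  have huniv := pm_univ μ N
  rw [hpm] at huniv
  exact pow_ne_zero N (Measure.measure_univ_ne_zero.2 hμ) huniv.symm

lemma Zfun_eq_integral_Wmeas (hW : AEMeasurable W (pm μ N))
    (hV : Integrable (fun x => exp (-V x)) (Wmeas μ N W)) :
    Zfun μ N W V = ∫ x, exp (-V x) ∂Wmeas μ N W := by
  have hdensity : AEMeasurable (fun x => ENNReal.ofReal (exp (-W x))) (pm μ N) := by
    fun_prop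
  rw [integral_eq_lintegral_of_nonneg_ae (ae_of_all _ fun _ => (exp_pos _).le) hV.1, Wmeas,
    lintegral_withDensity_eq_lintegral_mul₀' hdensity hV.1.aemeasurable.ennreal_ofReal, Zfun, ZE]
  congr! 3 with x
  rw [Pi.mul_apply, ← ENNReal.ofReal_mul (exp_pos _).le, ← exp_add, sub_eq_neg_add]

lemma FP_eq_gibbsFunctional (P : (Fin N → Λ) → ℝ) (hW : AEMeasurable W (pm μ N))
    (hV : Integrable (fun x => exp (-V x)) (Wmeas μ N W)) :
    FP μ N P W V = gibbsFunctional (Pmeas μ N P) (Wmeas μ N W) V := by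
  rw [FP, gibbsFunctional, Zfun_eq_integral_Wmeas hW hV]

/-- The Gibbs density `e^{-W-U} / Z(U)`, whose `m`-particle reduction is `ρ_U^{(m)}`. -/
def gibbsDensity (μ : Measure Λ) (N : ℕ) (W U : (Fin N → Λ) → ℝ) (x : Fin N → Λ) : ℝ :=
  exp (-(W x) - U x) / Zfun μ N W U

lemma rho_gibbsDensity (h : m ≤ N) (W U : (Fin N → Λ) → ℝ) :
    rho μ N m h (gibbsDensity μ N W U) = rhoU μ N m h W U :=
  funext fun _ => integral_div _ _

lemma Pmeas_gibbsDensity (hW : AEMeasurable W (pm μ N)) (hU : AEMeasurable U (pm μ N))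
    (hUexp : Integrable (fun x => exp (-U x)) (Wmeas μ N W)) :
    Pmeas μ N (gibbsDensity μ N W U) = (Wmeas μ N W).tilted (-U) := by
  have hWdensity : AEMeasurable (fun x => ENNReal.ofReal (exp (-W x))) (pm μ N) := by
    fun_prop
  have hUdensity : AEMeasurable (fun x => ENNReal.ofReal (exp (-U x) / Zfun μ N W U)) (pm μ N) := by
    fun_prop
  simp only [Measure.tilted, Pi.neg_apply]
  rw [← Zfun_eq_integral_Wmeas hW hUexp, Wmeas, ← withDensity_mul₀ hWdensity hUdensity, Pmeas]
  congr 1 with x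
  rw [Pi.mul_apply, ← ENNReal.ofReal_mul (exp_pos _).le, mul_div_assoc', ← exp_add,
    ← sub_eq_add_neg, gibbsDensity]

lemma isSymmDensity_gibbsDensity [SigmaFinite μ] (hW : AEMeasurable W (pm μ N))
    (hWsymm : ∀ σ : Equiv.Perm (Fin N), ∀ᵐ x ∂pm μ N, W (x ∘ σ) = W x)
    (hUexp : Integrable (fun x => exp (-U x)) (Wmeas μ N W)) (hU : HasSumStruct μ N m U u) :
    IsSymmDensity μ (gibbsDensity μ N W U) where
  integrable := by
    have hexp : Integrable (fun x => exp (-W x - U x)) (pm μ N) := by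
      rw [Wmeas, integrable_withDensity_iff_integrable_smul₀' (by fun_prop) (by simp)] at hUexp
      refine hUexp.congr (ae_of_all _ fun x => ?_)
      simp only [ENNReal.toReal_ofReal (exp_pos _).le, smul_eq_mul, ← exp_add, ← sub_eq_add_neg]
    exact hexp.div_const _
  nonneg := ae_of_all _ fun _ => div_nonneg (exp_pos _).le ENNReal.toReal_nonneg
  symm σ := by
    filter_upwards [hWsymm σ, hU.ae_comp_perm σ] with x hWx hUx
    rw [gibbsDensity, hWx, hUx, gibbsDensity]

end GibbsDensity

section InverseProblem

variable {μ : Measure Λ} {N m : ℕ} {h : m ≤ N} {P W U U₀ U₁ V : (Fin N → Λ) → ℝ}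
  {u u₀ u₁ v : (Fin m → Λ) → ℝ}

/-- `U`, with generator `u`, is a solution in `V_{ρ^{(m)}}` of the inverse problem
`ρ_U^{(m)} = ρ^{(m)}`. -/
structure IsInverseSolution (μ : Measure Λ) (h : m ≤ N) (P W U : (Fin N → Λ) → ℝ)
    (u : (Fin m → Λ) → ℝ) : Prop where
  integrable_exp : Integrable (fun x => exp (-(U x))) (Wmeas μ N W)
  hasSumStruct : HasSumStruct μ N m U u
  integrable_generator : Integrable u (rhomeas μ N m h P)
  rhoU_eq : rhoU μ N m h W U =ᵐ[pm μ m] rho μ N m h P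

namespace IsInverseSolution

protected lemma memVrho (hU : IsInverseSolution μ h P W U u) : memVrho μ N m h P W U :=
  ⟨hU.integrable_exp, u, hU.hasSumStruct, hU.integrable_generator⟩

lemma rhomeas_gibbsDensity (hU : IsInverseSolution μ h P W U u) :
    rhomeas μ N m h (gibbsDensity μ N W U) = rhomeas μ N m h P := by
  rw [rhomeas, rho_gibbsDensity]
  exact withDensity_congr_ae (hU.rhoU_eq.fun_comp ENNReal.ofReal)

variable [SigmaFinite μ]

lemma integrable_tilted (hW : AEMeasurable W (pm μ N))
    (hWsymm : ∀ σ : Equiv.Perm (Fin N), ∀ᵐ x ∂pm μ N, W (x ∘ σ) = W x)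
    (hU : IsInverseSolution μ h P W U u)
    (hV : HasSumStruct μ N m V v) (hv : Integrable v (rhomeas μ N m h P)) :
    Integrable V ((Wmeas μ N W).tilted (-U)) := by
  rw [← Pmeas_gibbsDensity hW hU.hasSumStruct.aemeasurable hU.integrable_exp]
  exact (isSymmDensity_gibbsDensity hW hWsymm hU.integrable_exp
    hU.hasSumStruct).integrable_of_hasSumStruct h hV (hU.rhomeas_gibbsDensity.symm ▸ hv)

lemma FP_eq_gibbsFunctional_tilted (hP : IsSymmDensity μ P) (hW : AEMeasurable W (pm μ N))
    (hWsymm : ∀ σ : Equiv.Perm (Fin N), ∀ᵐ x ∂pm μ N, W (x ∘ σ) = W x)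
    (hU : IsInverseSolution μ h P W U u)
    (hVexp : Integrable (fun x => exp (-V x)) (Wmeas μ N W)) (hV : HasSumStruct μ N m V v)
    (hv : Integrable v (rhomeas μ N m h P)) :
    FP μ N P W V = gibbsFunctional ((Wmeas μ N W).tilted (-U)) (Wmeas μ N W) V := by
  rw [hP.FP_eq_of_rhomeas_eq (isSymmDensity_gibbsDensity hW hWsymm hU.integrable_exp
    hU.hasSumStruct) h hU.rhomeas_gibbsDensity.symm W hV hv, FP_eq_gibbsFunctional _ hW hVexp,
    Pmeas_gibbsDensity hW hU.hasSumStruct.aemeasurable hU.integrable_exp]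

lemma FP_le (hμ : μ ≠ 0) (hP : IsSymmDensity μ P) (hW : AEMeasurable W (pm μ N))
    (hWsymm : ∀ σ : Equiv.Perm (Fin N), ∀ᵐ x ∂pm μ N, W (x ∘ σ) = W x)
    (hU : IsInverseSolution μ h P W U u) (hV : memVrho μ N m h P W V) :
    FP μ N P W V ≤ FP μ N P W U := by
  obtain ⟨hVexp, v, hVv, hv⟩ := hV
  have := neZero_Wmeas hμ hW
  rw [hU.FP_eq_gibbsFunctional_tilted hP hW hWsymm hVexp hVv hv,
    hU.FP_eq_gibbsFunctional_tilted hP hW hWsymm hU.integrable_exp hU.hasSumStruct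
      hU.integrable_generator]
  exact gibbsFunctional_tilted_le hU.integrable_exp hVexp
    (hU.integrable_tilted hW hWsymm hU.hasSumStruct hU.integrable_generator)
    (hU.integrable_tilted hW hWsymm hVv hv)

lemma ae_eq_add_const_of_FP_le (hμ : μ ≠ 0) (hP : IsSymmDensity μ P) (hW : AEMeasurable W (pm μ N))
    (hWsymm : ∀ σ : Equiv.Perm (Fin N), ∀ᵐ x ∂pm μ N, W (x ∘ σ) = W x)
    (hU : IsInverseSolution μ h P W U u) (hV : memVrho μ N m h P W V)
    (hle : FP μ N P W U ≤ FP μ N P W V) : ∃ C, V =ᵐ[pm μ N] fun x => U x + C := by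
  obtain ⟨hVexp, v, hVv, hv⟩ := hV
  have := neZero_Wmeas hμ hW
  rw [hU.FP_eq_gibbsFunctional_tilted hP hW hWsymm hVexp hVv hv,
    hU.FP_eq_gibbsFunctional_tilted hP hW hWsymm hU.integrable_exp hU.hasSumStruct
      hU.integrable_generator] at hle
  obtain ⟨C, hC⟩ := (ae_eq_add_const_or_gibbsFunctional_tilted_lt hU.integrable_exp hVexp
    (hU.integrable_tilted hW hWsymm hU.hasSumStruct hU.integrable_generator)
    (hU.integrable_tilted hW hWsymm hVv hv)).resolve_right hle.not_gt
  exact ⟨C, (absolutelyContinuous_Wmeas hW).ae_eq hC⟩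

end IsInverseSolution

lemma HasSumStruct.generator_sub_ae_eq_const [SigmaFinite μ] (hμ : μ ≠ 0) (h : m ≤ N) {C : ℝ}
    (hU₀ : HasSumStruct μ N m U₀ u₀) (hU₁ : HasSumStruct μ N m U₁ u₁)
    (hC : (fun x => U₁ x - U₀ x) =ᵐ[pm μ N] fun _ => C) :
    (fun y => u₁ y - u₀ y) =ᵐ[pm μ m] fun _ => C / N.choose m := by
  have hchoose : (N.choose m : ℝ) ≠ 0 := Nat.cast_ne_zero.2 (Nat.choose_pos h).ne'
  have hsum : mSum N m (fun y => u₁ y - u₀ y - C / N.choose m) =ᵐ[pm μ N] 0 := by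
    filter_upwards [hC, hU₀.2.2, hU₁.2.2] with x hx hx₀ hx₁
    rw [mSum_sub_sub_const, ← hx₀, ← hx₁, hx, mul_div_cancel₀ _ hchoose, sub_self, Pi.zero_apply]
  have hzero := ae_eq_zero_of_mSum_ae_eq_zero hμ h (v := fun y => u₁ y - u₀ y - C / N.choose m)
    (fun σ y => by simp only [hU₁.1 σ y, hU₀.1 σ y]) ((hU₁.2.1.sub hU₀.2.1).sub_const _) hsum
  exact hzero.mono fun _ hy => sub_eq_zero.1 hy

theorem statement16_general [SigmaFinite μ] (hμ : μ ≠ 0) (h : m ≤ N) (hP : IsSymmDensity μ P)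
    (hW : AEMeasurable W (pm μ N))
    (hWsymm : ∀ σ : Equiv.Perm (Fin N), ∀ᵐ x ∂pm μ N, W (x ∘ σ) = W x) :
    (∀ U u V, IsInverseSolution μ h P W U u → memVrho μ N m h P W V →
      FP μ N P W V ≤ FP μ N P W U) ∧
    (∀ U₀ U₁ u₀ u₁, IsInverseSolution μ h P W U₀ u₀ → IsInverseSolution μ h P W U₁ u₁ →
      (∃ C : ℝ, (fun x => U₁ x - U₀ x) =ᵐ[pm μ N] fun _ => C) ∧
      (∃ c : ℝ, (fun y => u₁ y - u₀ y) =ᵐ[pm μ m] fun _ => c)) := by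
  refine ⟨fun U u V hU hV => hU.FP_le hμ hP hW hWsymm hV, fun U₀ U₁ u₀ u₁ hU₀ hU₁ => ?_⟩
  have hle := hU₁.FP_le hμ hP hW hWsymm hU₀.memVrho
  obtain ⟨C, hadd⟩ := hU₀.ae_eq_add_const_of_FP_le hμ hP hW hWsymm hU₁.memVrho hle
  have hC : (fun x => U₁ x - U₀ x) =ᵐ[pm μ N] fun _ => C :=
    hadd.mono fun x hx => by simp only [hx, add_sub_cancel_left]
  exact ⟨⟨C, hC⟩, _, hU₀.hasSumStruct.generator_sub_ae_eq_const hμ h hU₁.hasSumStruct hC⟩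

end InverseProblem

/-- If `U ∈ V_{ρ^{(m)}}` (with generator `u`) satisfies
`ρ_U^{(m)} = ρ^{(m)}` a.e., then `F_P(V) ≤ F_P(U)` for every `V ∈ V_{ρ^{(m)}}`.
Consequently, any two solutions `U₀, U₁ ∈ V_{ρ^{(m)}}` of the inverse problem differ
a.e. by a real constant, and so do their generators. -/
theorem statement16 (μ : Measure Λ) [SigmaFinite μ] (hμ : μ ≠ 0)
    (N m : ℕ) (hN : 2 ≤ N) (hm : 1 ≤ m) (hmN : m ≤ N)
    (P W : (Fin N → Λ) → ℝ) (hPmeas : Measurable P)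
    (hPprob : ∫⁻ x, ENNReal.ofReal (P x) ∂(pm μ N) = 1)
    (hPpos : ∀ᵐ x ∂(pm μ N), 0 < P x)
    (hPsymm : ∀ σ : Equiv.Perm (Fin N), ∀ᵐ x ∂(pm μ N), P (x ∘ σ) = P x)
    (hWmeas : Measurable W)
    (hWsymm : ∀ σ : Equiv.Perm (Fin N), ∀ᵐ x ∂(pm μ N), W (x ∘ σ) = W x)
    (U : (Fin N → Λ) → ℝ) (u : (Fin m → Λ) → ℝ)
    (hUint : Integrable (fun x => Real.exp (-(U x))) (Wmeas μ N W))
    (hUstruct : HasSumStruct μ N m U u)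
    (hu : Integrable u (rhomeas μ N m hmN P))
    (hUsol : rhoU μ N m hmN W U =ᵐ[pm μ m] rho μ N m hmN P) :
    (∀ V, memVrho μ N m hmN P W V → FP μ N P W V ≤ FP μ N P W U) ∧
    (∀ U₀ U₁ u₀ u₁,
        Integrable (fun x => Real.exp (-(U₀ x))) (Wmeas μ N W) →
        Integrable (fun x => Real.exp (-(U₁ x))) (Wmeas μ N W) →
        HasSumStruct μ N m U₀ u₀ → HasSumStruct μ N m U₁ u₁ →
        Integrable u₀ (rhomeas μ N m hmN P) → Integrable u₁ (rhomeas μ N m hmN P) →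
        rhoU μ N m hmN W U₀ =ᵐ[pm μ m] rho μ N m hmN P →
        rhoU μ N m hmN W U₁ =ᵐ[pm μ m] rho μ N m hmN P →
        (∃ C : ℝ, (fun x => U₁ x - U₀ x) =ᵐ[pm μ N] fun _ => C) ∧
        (∃ c : ℝ, (fun y => u₁ y - u₀ y) =ᵐ[pm μ m] fun _ => c)) := by
  have hP : IsSymmDensity μ P :=
    ⟨⟨hPmeas.aestronglyMeasurable, by
      rw [hasFiniteIntegral_iff_ofReal (hPpos.mono fun _ hx => hx.le), hPprob]
      exact ENNReal.one_lt_top⟩, hPpos.mono fun _ hx => hx.le, hPsymm⟩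
  obtain ⟨hmax, huniq⟩ := statement16_general hμ hmN hP hWmeas.aemeasurable hWsymm
  exact ⟨fun V => hmax U u V ⟨hUint, hUstruct, hu, hUsol⟩,
    fun U₀ U₁ u₀ u₁ hexp₀ hexp₁ hU₀ hU₁ hu₀ hu₁ hsol₀ hsol₁ =>
      huniq U₀ U₁ u₀ u₁ ⟨hexp₀, hU₀, hu₀, hsol₀⟩ ⟨hexp₁, hU₁, hu₁, hsol₁⟩⟩

end
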